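/- Let L be the canonical α-stable cylindrical Lévy process on G with α ∈ (0,2), and (ψ_n) a sequence of L₂(G,H)-valued step functions. Then ∫₀^T ‖ψ_n(t)‖_HS^α dt → 0 if and only if sup_{γ ∈ S^{1,op}_det} E[‖∫₀^T γψ_n dL‖ ∧ 1] → 0. -/

import Mathlib

open MeasureTheory Filter Topology RealInnerProductSpace

noncomputable section

variable {G : Type} [NormedAddCommGroup G] [InnerProductSpace ℝ G] [CompleteSpace G]
variable {H : Type} [NormedAddCommGroup H] [InnerProductSpace ℝ H] [CompleteSpace H]
variable [MeasurableSpace H] [BorelSpace H] [SecondCountableTopology H]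
variable {Ω : Type} [MeasurableSpace Ω]

/-- `ψ` is an `L₂(G,H)`-valued step function on `[0,T]`. -/
def IsStepHS (bG : HilbertBasis ℕ ℝ G) (T : ℝ) (ψ : ℝ → (G →L[ℝ] H)) : Prop :=
  ∃ (N : ℕ) (tp : Fin (N + 1) → ℝ) (Φ : Fin N → (G →L[ℝ] H)),
    StrictMono tp ∧ tp 0 = 0 ∧ tp (Fin.last N) = T ∧
    (∀ i, Summable fun k => ‖Φ i (bG k)‖ ^ 2) ∧
    ∀ s, s ≠ 0 → ψ s = ∑ i : Fin N,
      if s ∈ Set.Ioc (tp i.castSucc) (tp i.succ) then Φ i else 0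

/-- `γ` is an `L(H,H)`-valued step function on `[0,T]` bounded by `1` in operator norm. -/
def IsStepOp1 (T : ℝ) (γ : ℝ → (H →L[ℝ] H)) : Prop :=
  (∀ s, ‖γ s‖ ≤ 1) ∧
  ∃ (M : ℕ) (sp : Fin (M + 1) → ℝ) (Γop : Fin M → (H →L[ℝ] H)),
    StrictMono sp ∧ sp 0 = 0 ∧ sp (Fin.last M) = T ∧
    ∀ s, s ≠ 0 → γ s = ∑ i : Fin M,
      if s ∈ Set.Ioc (sp i.castSucc) (sp i.succ) then Γop i else 0

/-- `X` is (a version of) the stochastic integral `∫₀^T f dL` of a step function `f` with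
respect to the canonical `α`-stable cylindrical Lévy process `L`, i.e. the sum of the
Radonified increments, characterised in distribution by its characteristic function
`u ↦ exp(-∫₀^T ‖f(t)* u‖^α dt)`. -/
def IsIntegralOf (P : Measure Ω) (X : Ω → H) (T α : ℝ) (f : ℝ → (G →L[ℝ] H)) : Prop :=
  Measurable X ∧ ∀ u : H,
    ∫ ω, Complex.exp (⟪u, X ω⟫ * Complex.I) ∂P
      = Complex.exp (-(∫ t in Set.Ioc 0 T,
          ‖(ContinuousLinearMap.adjoint (f t)) u‖ ^ α : ℝ))

/-!
Write `I = ∫₀^T ‖f(t)‖_HS^α dt` and `X = ∫₀^T f dL`. Everything reduces to the two-sided bound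
`(1 - exp (-I)) / 3 ≤ E[1 - exp (-‖X‖² / 2)] ≤ I`, because `1 - exp (-x² / 2)` is comparable with
`min x 1` and its square.

If `f` takes values in operators into a finite-dimensional space, integrating the characteristic
function of `X` against a standard Gaussian vector `v` and swapping the integrals gives
`E[1 - exp (-‖X‖² / 2)] = E[1 - exp (-∫₀^T ‖f(t)* v‖^α dt)]`. For a fixed operator `A`, the variable
`‖A* v‖²` has mean `‖A‖_HS²` and second moment at most `3 ‖A‖_HS⁴`, so the mean of `‖A* v‖^α` is at
most `‖A‖_HS^α`, and truncating `‖A* v‖²` at its mean still leaves at least a third of it. As the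
constants do not depend on the dimension, projecting onto an increasing sequence of subspaces gives
the general case.

Composing with contractions `γ(t)` only decreases `I`, which gives one implication uniformly in
`γ`; taking `γ = id` gives the converse.
-/

section RealInequalities

lemma mul_one_sub_exp_neg_le {x : ℝ} (hx₀ : 0 ≤ x) (hx₁ : x ≤ 1) (a : ℝ) :
    x * (1 - Real.exp (-a)) ≤ 1 - Real.exp (-(x * a)) := by
  have hconv := convexOn_exp.2 (Set.mem_univ (-a)) (Set.mem_univ 0) hx₀ (sub_nonneg.2 hx₁)
    (add_sub_cancel x 1)
  simp only [smul_eq_mul, mul_zero, add_zero, Real.exp_zero, mul_one, mul_neg] at hconv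
  linarith

lemma one_sub_exp_neg_nonneg {x : ℝ} (hx : 0 ≤ x) : 0 ≤ 1 - Real.exp (-x) :=
  sub_nonneg.2 (Real.exp_le_one_iff.2 (neg_nonpos.2 hx))

lemma one_sub_exp_neg_le (x : ℝ) : 1 - Real.exp (-x) ≤ x := by
  linarith [Real.one_sub_le_exp_neg x]

lemma norm_one_sub_exp_neg_le_one {x : ℝ} (hx : 0 ≤ x) : ‖1 - Real.exp (-x)‖ ≤ 1 := by
  rw [Real.norm_of_nonneg (one_sub_exp_neg_nonneg hx)]
  linarith [Real.exp_pos (-x)]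

lemma one_sub_exp_neg_sq_half_le_min {x : ℝ} (hx : 0 ≤ x) :
    1 - Real.exp (-(x ^ 2 / 2)) ≤ min x 1 := by
  refine le_min ?_ (by linarith [Real.exp_pos (-(x ^ 2 / 2))])
  rcases le_total x 1 with hx₁ | hx₁
  · nlinarith [one_sub_exp_neg_le (x ^ 2 / 2)]
  · linarith [Real.exp_pos (-(x ^ 2 / 2))]

lemma min_one_sq_le_three_mul_one_sub_exp {x : ℝ} (hx : 0 ≤ x) :
    min x 1 ^ 2 ≤ 3 * (1 - Real.exp (-(x ^ 2 / 2))) := by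
  have hhalf : Real.exp (-(1 / 2)) ≤ 2 / 3 := by
    rw [Real.exp_neg, inv_le_comm₀ (Real.exp_pos _) (by norm_num)]
    linarith [Real.add_one_le_exp (1 / 2)]
  have hm₀ : 0 ≤ min x 1 := le_min hx zero_le_one
  have hconc := mul_one_sub_exp_neg_le (sq_nonneg (min x 1))
    (pow_le_one₀ hm₀ (min_le_right x 1)) (1 / 2)
  have hmono : Real.exp (-(x ^ 2 / 2)) ≤ Real.exp (-(min x 1 ^ 2 * (1 / 2))) := by
    have := pow_le_pow_left₀ hm₀ (min_le_left x 1) 2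
    gcongr
    linarith
  nlinarith [sq_nonneg (min x 1)]

lemma rpow_mul_min_div_one_le_rpow {s z q : ℝ} (hs : 0 ≤ s) (hz : 0 ≤ z) (hq₀ : 0 < q)
    (hq₁ : q ≤ 1) : s ^ q * min (z / s) 1 ≤ z ^ q := by
  rcases hs.eq_or_lt with rfl | hs'
  · simpa [Real.zero_rpow hq₀.ne'] using Real.rpow_nonneg hz q
  have hr₀ : 0 ≤ min (z / s) 1 := by positivity
  calc s ^ q * min (z / s) 1 ≤ s ^ q * min (z / s) 1 ^ q := by
        gcongr
        exact Real.self_le_rpow_of_le_one hr₀ (min_le_right _ _) hq₁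
    _ ≤ s ^ q * (z / s) ^ q := by gcongr; exact min_le_left _ _
    _ = z ^ q := by rw [← Real.mul_rpow hs (by positivity), mul_div_cancel₀ z hs'.ne']

end RealInequalities

section Moments

variable {Ω' : Type*} [MeasurableSpace Ω'] {μ : Measure Ω'} [IsProbabilityMeasure μ] {Z : Ω' → ℝ}

lemma integrable_rpow_of_le_one (hZ₀ : ∀ ω, 0 ≤ Z ω) (hZ : Integrable Z μ) {q : ℝ} (hq₀ : 0 ≤ q)
    (hq₁ : q ≤ 1) : Integrable (fun ω => Z ω ^ q) μ := by
  refine ((integrable_const (1 : ℝ)).add hZ).mono'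
    (hZ.aemeasurable.pow_const q).aestronglyMeasurable (ae_of_all _ fun ω => ?_)
  rw [Real.norm_of_nonneg (Real.rpow_nonneg (hZ₀ ω) q)]
  have := rpow_one_add_le_one_add_mul_self (s := Z ω - 1) (by linarith [hZ₀ ω]) hq₀ hq₁
  rw [add_sub_cancel] at this
  calc Z ω ^ q ≤ 1 + q * (Z ω - 1) := this
    _ ≤ 1 + Z ω := by nlinarith [hZ₀ ω]

lemma integral_rpow_le_rpow_integral (hZ₀ : ∀ ω, 0 ≤ Z ω) (hZ : Integrable Z μ) {q : ℝ}
    (hq₀ : 0 ≤ q) (hq₁ : q ≤ 1) : ∫ ω, Z ω ^ q ∂μ ≤ (∫ ω, Z ω ∂μ) ^ q :=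
  (Real.concaveOn_rpow hq₀ hq₁).le_map_integral (Real.continuous_rpow_const hq₀).continuousOn
    isClosed_Ici (ae_of_all _ hZ₀) hZ (integrable_rpow_of_le_one hZ₀ hZ hq₀ hq₁)

lemma inv_le_integral_min_div_one (hZ₀ : ∀ ω, 0 ≤ Z ω) (hZ : MemLp Z 2 μ) {m C : ℝ} (hm : 0 < m)
    (hC : 2 ≤ C) (hmean : ∫ ω, Z ω ∂μ = m) (hsq : ∫ ω, Z ω ^ 2 ∂μ ≤ C * m ^ 2) :
    C⁻¹ ≤ ∫ ω, min (Z ω / m) 1 ∂μ := by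
  have hZ₁ : Integrable Z μ := hZ.integrable one_le_two
  -- `2y - y² ≤ min (Cy) 1` at `y = Z / (C m)`: the mean of the quadratic is known
  have hpt (ω : Ω') : 2 / (C * m) * Z ω - 1 / (C * m) ^ 2 * Z ω ^ 2 ≤ min (Z ω / m) 1 := by
    have hr : 0 ≤ Z ω / m := div_nonneg (hZ₀ ω) hm.le
    have hrew : 2 / (C * m) * Z ω - 1 / (C * m) ^ 2 * Z ω ^ 2
        = 2 * (Z ω / m / C) - (Z ω / m / C) ^ 2 := by field_simp
    have hhalf : Z ω / m / C ≤ Z ω / m / 2 := by gcongr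
    rw [hrew]
    refine le_min ?_ ?_
    · nlinarith [sq_nonneg (Z ω / m / C)]
    · nlinarith [sq_nonneg (Z ω / m / C - 1)]
  calc C⁻¹ = 2 / (C * m) * m - 1 / (C * m) ^ 2 * (C * m ^ 2) := by field_simp; norm_num
    _ ≤ 2 / (C * m) * ∫ ω, Z ω ∂μ - 1 / (C * m) ^ 2 * ∫ ω, Z ω ^ 2 ∂μ := by
      rw [hmean]; gcongr
    _ = ∫ ω, (2 / (C * m) * Z ω - 1 / (C * m) ^ 2 * Z ω ^ 2) ∂μ := by
      rw [integral_sub (hZ₁.const_mul _) (hZ.integrable_sq.const_mul _), integral_const_mul,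
        integral_const_mul]
    _ ≤ ∫ ω, min (Z ω / m) 1 ∂μ := by
      refine integral_mono ((hZ₁.const_mul _).sub (hZ.integrable_sq.const_mul _))
        ?_ hpt
      exact (hZ₁.div_const m).inf (integrable_const 1)

end Moments

section Gaussian

open ProbabilityTheory
open scoped NNReal ENNReal

lemma deriv_eval_mul_exp_sq (p : Polynomial ℝ) (v : ℝ) :
    deriv (fun t => p.eval t * Real.exp (v * t ^ 2 / 2)) =
      fun t => (p.derivative + .C v * .X * p).eval t * Real.exp (v * t ^ 2 / 2) := by
  ext t
  have hsq : HasDerivAt (fun t : ℝ => v * t ^ 2 / 2) (v * t) t :=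
    (((hasDerivAt_pow 2 t).const_mul v).div_const 2).congr_deriv (by simp; ring)
  refine ((p.hasDerivAt t).fun_mul hsq.exp).deriv.trans ?_
  simp only [Polynomial.eval_add, Polynomial.eval_mul, Polynomial.eval_C, Polynomial.eval_X]
  ring

lemma integral_pow_four_gaussianReal (v : ℝ≥0) :
    ∫ x, x ^ 4 ∂gaussianReal 0 v = 3 * (v : ℝ) ^ 2 := by
  have hmgf : mgf id (gaussianReal 0 v) =
      fun t => (1 : Polynomial ℝ).eval t * Real.exp (v * t ^ 2 / 2) := by
    simp [mgf_id_gaussianReal]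
  have hmoment : ∫ x, x ^ 4 ∂gaussianReal 0 v = iteratedDeriv 4 (mgf id (gaussianReal 0 v)) 0 :=
    (iteratedDeriv_mgf_zero (by simp) 4).symm
  simp only [hmoment, hmgf, iteratedDeriv_succ', iteratedDeriv_zero, deriv_eval_mul_exp_sq]
  simp only [Polynomial.derivative_one, mul_one, zero_add, Polynomial.derivative_mul,
    Polynomial.derivative_C, zero_mul, Polynomial.derivative_X, Polynomial.derivative_add,
    mul_zero, add_zero, Polynomial.eval_add, Polynomial.eval_mul, Polynomial.eval_C,
    Polynomial.eval_X, ne_eq, OfNat.ofNat_ne_zero, not_false_eq_true, zero_pow, zero_div,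
    Real.exp_zero]
  ring

variable {V : Type*} [NormedAddCommGroup V] [InnerProductSpace ℝ V] [FiniteDimensional ℝ V]
  [MeasurableSpace V] [BorelSpace V]

lemma memLp_clm_stdGaussian {E : Type*} [NormedAddCommGroup E] [NormedSpace ℝ E] (B : V →L[ℝ] E)
    {p : ℝ≥0∞} (hp : p ≠ ∞) : MemLp B p (stdGaussian V) :=
  B.comp_memLp' (IsGaussian.memLp_id _ p hp)

lemma map_inner_stdGaussian (a : V) :
    (stdGaussian V).map (fun v => ⟪a, v⟫) = gaussianReal 0 (‖a‖₊ ^ 2) := by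
  have hmap := IsGaussian.map_eq_gaussianReal (μ := stdGaussian V) (innerSL ℝ a)
  rw [variance_dual_stdGaussian, integral_strongDual_stdGaussian, innerSL_apply_norm] at hmap
  rwa [Real.toNNReal_pow (norm_nonneg a), norm_toNNReal] at hmap

lemma integral_inner_pow_stdGaussian (a : V) (n : ℕ) :
    ∫ v, ⟪a, v⟫ ^ n ∂stdGaussian V = ∫ x, x ^ n ∂gaussianReal 0 (‖a‖₊ ^ 2) := by
  rw [← map_inner_stdGaussian a, integral_map (by fun_prop) (by fun_prop)]

lemma integral_inner_sq_stdGaussian (a : V) : ∫ v, ⟪a, v⟫ ^ 2 ∂stdGaussian V = ‖a‖ ^ 2 := by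
  have hvar := variance_of_integral_eq_zero (μ := gaussianReal 0 (‖a‖₊ ^ 2)) (X := fun x => x)
    (by fun_prop) integral_id_gaussianReal
  rw [integral_inner_pow_stdGaussian, ← hvar, variance_fun_id_gaussianReal]
  simp

lemma integral_inner_pow_four_stdGaussian (a : V) :
    ∫ v, ⟪a, v⟫ ^ 4 ∂stdGaussian V = 3 * ‖a‖ ^ 4 := by
  rw [integral_inner_pow_stdGaussian, integral_pow_four_gaussianReal]
  push_cast
  ring

lemma memLp_inner_sq_stdGaussian (a : V) : MemLp (fun v => ⟪a, v⟫ ^ 2) 2 (stdGaussian V) := by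
  refine (memLp_two_iff_integrable_sq (by fun_prop)).2 ?_
  simp_rw [← pow_mul]
  simpa [Even.pow_abs (by decide : Even 4)] using
    (memLp_clm_stdGaussian (innerSL ℝ a) (by simp : (4 : ℝ≥0∞) ≠ ∞)).integrable_norm_pow'

lemma integral_inner_sq_mul_inner_sq_stdGaussian_le (a b : V) :
    ∫ v, ⟪a, v⟫ ^ 2 * ⟪b, v⟫ ^ 2 ∂stdGaussian V ≤ 3 * (‖a‖ ^ 2 * ‖b‖ ^ 2) := by
  have hholder := integral_mul_le_Lp_mul_Lq_of_nonneg (μ := stdGaussian V) (p := 2) (q := 2)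
    (f := fun v => ⟪a, v⟫ ^ 2) (g := fun v => ⟪b, v⟫ ^ 2) .two_two
    (ae_of_all _ fun _ => sq_nonneg _) (ae_of_all _ fun _ => sq_nonneg _)
    (by simpa using memLp_inner_sq_stdGaussian a) (by simpa using memLp_inner_sq_stdGaussian b)
  have hL2 (c : V) : (∫ v, (⟪c, v⟫ ^ 2) ^ (2 : ℝ) ∂stdGaussian V) ^ (1 / 2 : ℝ)
      = √3 * ‖c‖ ^ 2 := by
    simp_rw [Real.rpow_two, ← pow_mul]
    rw [integral_inner_pow_four_stdGaussian, ← Real.sqrt_eq_rpow, Real.sqrt_mul zero_le_three,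
      show ‖c‖ ^ 4 = (‖c‖ ^ 2) ^ 2 by ring, Real.sqrt_sq (by positivity)]
  rw [hL2, hL2] at hholder
  calc _ ≤ _ := hholder
    _ = √3 ^ 2 * (‖a‖ ^ 2 * ‖b‖ ^ 2) := by ring
    _ = 3 * (‖a‖ ^ 2 * ‖b‖ ^ 2) := by rw [Real.sq_sqrt zero_le_three]

end Gaussian

section HilbertSchmidt

variable {ι E F F' S : Type*} [NormedAddCommGroup E] [InnerProductSpace ℝ E]
  [NormedAddCommGroup F] [NormedSpace ℝ F] [NormedAddCommGroup F'] [NormedSpace ℝ F']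
  [MeasurableSpace S] {μ : Measure S} {b : HilbertBasis ι ℝ E} {α : ℝ} {f : S → E →L[ℝ] F}
  {C : S → F →L[ℝ] F'}

/-- The squared Hilbert–Schmidt norm of `A`, computed in the orthonormal basis `b`. For an operator
that is not Hilbert–Schmidt the series diverges and the value is the junk value `0`. -/
def hsNormSq (b : HilbertBasis ι ℝ E) (A : E →L[ℝ] F) : ℝ :=
  ∑' i, ‖A (b i)‖ ^ 2

/-- Membership of `f` in `L^α(μ; L₂(E, F))`, the space of integrands of the canonical `α`-stable
cylindrical Lévy process. Measurability is asked for in operator norm. -/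
structure HSIntegrable (b : HilbertBasis ι ℝ E) (α : ℝ) (f : S → E →L[ℝ] F) (μ : Measure S) :
    Prop where
  aestronglyMeasurable : AEStronglyMeasurable f μ
  ae_summable : ∀ᵐ t ∂μ, Summable fun i => ‖f t (b i)‖ ^ 2
  integrable : Integrable (fun t => hsNormSq b (f t) ^ (α / 2)) μ

lemma hsNormSq_nonneg (b : HilbertBasis ι ℝ E) (A : E →L[ℝ] F) : 0 ≤ hsNormSq b A :=
  tsum_nonneg fun _ => sq_nonneg _

lemma norm_apply_sq_le_of_norm_le_one {B : F →L[ℝ] F'} (hB : ‖B‖ ≤ 1) (x : F) :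
    ‖B x‖ ^ 2 ≤ ‖x‖ ^ 2 := by
  gcongr
  simpa using B.le_of_opNorm_le hB x

lemma summable_norm_comp_sq {B : F →L[ℝ] F'} (hB : ‖B‖ ≤ 1) {A : E →L[ℝ] F}
    (hA : Summable fun i => ‖A (b i)‖ ^ 2) : Summable fun i => ‖(B ∘L A) (b i)‖ ^ 2 :=
  hA.of_nonneg_of_le (fun _ => sq_nonneg _) fun i => norm_apply_sq_le_of_norm_le_one hB (A (b i))

lemma hsNormSq_comp_le {B : F →L[ℝ] F'} (hB : ‖B‖ ≤ 1) {A : E →L[ℝ] F}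
    (hA : Summable fun i => ‖A (b i)‖ ^ 2) : hsNormSq b (B ∘L A) ≤ hsNormSq b A :=
  (summable_norm_comp_sq hB hA).tsum_le_tsum
    (fun i => norm_apply_sq_le_of_norm_le_one hB (A (b i))) hA

lemma aemeasurable_hsNormSq [Countable ι] (b : HilbertBasis ι ℝ E)
    (hf : AEStronglyMeasurable f μ) : AEMeasurable (fun t => hsNormSq b (f t)) μ := by
  have htsum (t : S) : hsNormSq b (f t) = (∑' i, ENNReal.ofReal (‖f t (b i)‖ ^ 2)).toReal := by
    simp [ENNReal.tsum_toReal_eq, hsNormSq]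
  simp_rw [htsum]
  refine (AEMeasurable.tsum fun i => ?_).ennreal_toReal
  exact ((hf.apply_continuousLinearMap (b i)).norm.aemeasurable.pow_const 2).ennreal_ofReal

namespace HSIntegrable

lemma ae_hsNormSq_comp_rpow_le (hf : HSIntegrable b α f μ) (hC₁ : ∀ t, ‖C t‖ ≤ 1) (hα : 0 ≤ α) :
    ∀ᵐ t ∂μ, hsNormSq b (C t ∘L f t) ^ (α / 2) ≤ hsNormSq b (f t) ^ (α / 2) := by
  filter_upwards [hf.ae_summable] with t ht
  exact Real.rpow_le_rpow (hsNormSq_nonneg _ _) (hsNormSq_comp_le (hC₁ t) ht) (by positivity)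

lemma comp [Countable ι] (hf : HSIntegrable b α f μ) (hC : AEStronglyMeasurable C μ)
    (hC₁ : ∀ t, ‖C t‖ ≤ 1) (hα : 0 ≤ α) : HSIntegrable b α (fun t => C t ∘L f t) μ where
  aestronglyMeasurable :=
    (ContinuousLinearMap.compL ℝ E F F').aestronglyMeasurable_comp₂ hC hf.aestronglyMeasurable
  ae_summable := hf.ae_summable.mono fun t => summable_norm_comp_sq (hC₁ t)
  integrable := by
    have hmeas := (aemeasurable_hsNormSq b ((ContinuousLinearMap.compL ℝ E F F'
      ).aestronglyMeasurable_comp₂ hC hf.aestronglyMeasurable)).pow_const (α / 2)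
    refine hf.integrable.mono' hmeas.aestronglyMeasurable ?_
    filter_upwards [hf.ae_hsNormSq_comp_rpow_le hC₁ hα] with t ht
    exact (Real.norm_of_nonneg (Real.rpow_nonneg (hsNormSq_nonneg _ _) _)).trans_le ht

lemma integral_comp_le [Countable ι] (hf : HSIntegrable b α f μ) (hC : AEStronglyMeasurable C μ)
    (hC₁ : ∀ t, ‖C t‖ ≤ 1) (hα : 0 ≤ α) :
    ∫ t, hsNormSq b (C t ∘L f t) ^ (α / 2) ∂μ ≤ ∫ t, hsNormSq b (f t) ^ (α / 2) ∂μ :=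
  integral_mono_ae (hf.comp hC hC₁ hα).integrable hf.integrable
    (hf.ae_hsNormSq_comp_rpow_le hC₁ hα)

end HSIntegrable

end HilbertSchmidt

section GaussianAdjoint

variable {ι E V : Type*} [NormedAddCommGroup E] [InnerProductSpace ℝ E] [CompleteSpace E]
  [NormedAddCommGroup V] [InnerProductSpace ℝ V] [FiniteDimensional ℝ V]

open ProbabilityTheory
open scoped InnerProduct

lemma hasSum_inner_apply_sq (b : HilbertBasis ι ℝ E) (A : E →L[ℝ] V) (v : V) :
    HasSum (fun i => ⟪A (b i), v⟫ ^ 2) (‖(A†) v‖ ^ 2) := by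
  have hparseval := b.hasSum_inner_mul_inner ((A†) v) ((A†) v)
  rw [real_inner_self_eq_norm_sq] at hparseval
  refine hparseval.congr_fun fun i => ?_
  rw [A.adjoint_inner_left, A.adjoint_inner_right, real_inner_comm, sq]

variable [MeasurableSpace V] [BorelSpace V] {b : HilbertBasis ι ℝ E} {A : E →L[ℝ] V}

lemma memLp_norm_adjoint_sq (A : E →L[ℝ] V) :
    MemLp (fun v => ‖(A†) v‖ ^ 2) 2 (stdGaussian V) := by
  refine (memLp_two_iff_integrable_sq (by fun_prop)).2 ?_
  simp_rw [← pow_mul]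
  exact (memLp_clm_stdGaussian (A†) (by simp : (4 : ENNReal) ≠ ⊤)).integrable_norm_pow'

lemma integral_norm_adjoint_sq [Countable ι] (hA : Summable fun i => ‖A (b i)‖ ^ 2) :
    ∫ v, ‖(A†) v‖ ^ 2 ∂stdGaussian V = hsNormSq b A := by
  have hsum := hasSum_integral_of_summable_integral_norm (μ := stdGaussian V)
    (F := fun i v => ⟪A (b i), v⟫ ^ 2)
    (fun i => (memLp_inner_sq_stdGaussian (A (b i))).integrable one_le_two)
    (by simpa [integral_inner_sq_stdGaussian] using hA)
  simp_rw [(hasSum_inner_apply_sq b A _).tsum_eq, integral_inner_sq_stdGaussian] at hsum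
  exact hsum.tsum_eq.symm

lemma integral_norm_adjoint_sq_sq_le [Countable ι] (hA : Summable fun i => ‖A (b i)‖ ^ 2) :
    ∫ v, (‖(A†) v‖ ^ 2) ^ 2 ∂stdGaussian V ≤ 3 * hsNormSq b A ^ 2 := by
  set Q : ι × ι → V → ℝ := fun p v => ⟪A (b p.1), v⟫ ^ 2 * ⟪A (b p.2), v⟫ ^ 2
  set N : ι × ι → ℝ := fun p => ‖A (b p.1)‖ ^ 2 * ‖A (b p.2)‖ ^ 2
  have hN : Summable N := hA.mul_of_nonneg hA (fun _ => sq_nonneg _) fun _ => sq_nonneg _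
  have hQ₀ (p : ι × ι) (v : V) : 0 ≤ Q p v := by positivity
  have hQN (p : ι × ι) : ∫ v, Q p v ∂stdGaussian V ≤ 3 * N p :=
    integral_inner_sq_mul_inner_sq_stdGaussian_le _ _
  have hQ (v : V) : (‖(A†) v‖ ^ 2) ^ 2 = ∑' p, Q p v := by
    have hv := hasSum_inner_apply_sq b A v
    rw [sq, ← hv.tsum_eq]
    exact hv.summable.tsum_mul_tsum hv.summable (hv.summable.mul_of_nonneg hv.summable
      (fun _ => sq_nonneg _) fun _ => sq_nonneg _)
  have hQsum : Summable fun p => ∫ v, Q p v ∂stdGaussian V :=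
    (hN.mul_left 3).of_nonneg_of_le (fun p => integral_nonneg (hQ₀ p)) hQN
  have hsum := hasSum_integral_of_summable_integral_norm (μ := stdGaussian V) (F := Q)
    (fun p => (memLp_inner_sq_stdGaussian _).integrable_mul (memLp_inner_sq_stdGaussian _))
    (by simpa only [Real.norm_of_nonneg (hQ₀ _ _)] using hQsum)
  calc ∫ v, (‖(A†) v‖ ^ 2) ^ 2 ∂stdGaussian V
      = ∑' p, ∫ v, Q p v ∂stdGaussian V := by simp_rw [hQ]; exact hsum.tsum_eq.symm
    _ ≤ ∑' p, 3 * N p := hQsum.tsum_le_tsum hQN (hN.mul_left 3)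
    _ = 3 * hsNormSq b A ^ 2 := by
      rw [tsum_mul_left, sq (hsNormSq b A), hsNormSq, hA.tsum_mul_tsum hA hN]

end GaussianAdjoint

section StableExponent

open ProbabilityTheory
open scoped InnerProduct

variable {E F S : Type*} [NormedAddCommGroup E] [InnerProductSpace ℝ E] [CompleteSpace E]
  [NormedAddCommGroup F] [InnerProductSpace ℝ F] [CompleteSpace F] [MeasurableSpace S]

/-- The exponent `u ↦ ∫ ‖f(t)* u‖^α dμ(t)` of the stochastic integral of `f` against the canonical
`α`-stable cylindrical Lévy process `L`, so that `∫ f dL` has characteristic function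
`u ↦ exp (-stableExponent α f μ u)`. -/
def stableExponent (α : ℝ) (f : S → E →L[ℝ] F) (μ : Measure S) (u : F) : ℝ :=
  ∫ t, ‖((f t)†) u‖ ^ α ∂μ

lemma stableExponent_nonneg (α : ℝ) (f : S → E →L[ℝ] F) (μ : Measure S) (u : F) :
    0 ≤ stableExponent α f μ u :=
  integral_nonneg fun _ => Real.rpow_nonneg (norm_nonneg _) α

variable {ι V : Type*} [NormedAddCommGroup V] [InnerProductSpace ℝ V] [FiniteDimensional ℝ V]
  {b : HilbertBasis ι ℝ E} {α : ℝ}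

/-- The quantity `‖A‖_HS ^ α * (‖A* v‖² / ‖A‖_HS² ∧ 1)`. It is a minorant of `‖A* v‖ ^ α` which is
bounded in `v`, but whose Gaussian mean is still comparable to `‖A‖_HS ^ α`. -/
def truncNormAdjoint (b : HilbertBasis ι ℝ E) (α : ℝ) (A : E →L[ℝ] V) (v : V) : ℝ :=
  hsNormSq b A ^ (α / 2) * min (‖(A†) v‖ ^ 2 / hsNormSq b A) 1

lemma sq_rpow_half {x : ℝ} (hx : 0 ≤ x) (α : ℝ) : (x ^ 2) ^ (α / 2) = x ^ α := by
  rw [← Real.rpow_natCast_mul hx, Nat.cast_ofNat, mul_div_cancel₀ α two_ne_zero]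

lemma truncNormAdjoint_nonneg (A : E →L[ℝ] V) (v : V) : 0 ≤ truncNormAdjoint b α A v :=
  mul_nonneg (Real.rpow_nonneg (hsNormSq_nonneg b A) _)
    (le_min (div_nonneg (sq_nonneg _) (hsNormSq_nonneg b A)) zero_le_one)

lemma truncNormAdjoint_le_hsNormSq_rpow (A : E →L[ℝ] V) (v : V) :
    truncNormAdjoint b α A v ≤ hsNormSq b A ^ (α / 2) :=
  mul_le_of_le_one_right (Real.rpow_nonneg (hsNormSq_nonneg b A) _) (min_le_right _ _)

lemma truncNormAdjoint_le_norm_adjoint_rpow (hα : 0 < α) (hα₂ : α ≤ 2) (A : E →L[ℝ] V) (v : V) :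
    truncNormAdjoint b α A v ≤ ‖(A†) v‖ ^ α := by
  rw [← sq_rpow_half (norm_nonneg _) α]
  exact rpow_mul_min_div_one_le_rpow (hsNormSq_nonneg b A) (sq_nonneg _) (by positivity)
    (by linarith)

lemma hsNormSq_rpow_div_three_le_integral_truncNormAdjoint [Countable ι] [MeasurableSpace V]
    [BorelSpace V] (hα : 0 < α) {A : E →L[ℝ] V} (hA : Summable fun i => ‖A (b i)‖ ^ 2) :
    hsNormSq b A ^ (α / 2) / 3 ≤ ∫ v, truncNormAdjoint b α A v ∂stdGaussian V := by
  simp_rw [truncNormAdjoint, integral_const_mul, div_eq_mul_inv _ (3 : ℝ)]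
  rcases (hsNormSq_nonneg b A).eq_or_lt with hs | hs
  · simp [← hs, Real.zero_rpow (by positivity : α / 2 ≠ 0)]
  · gcongr
    exact inv_le_integral_min_div_one (fun _ => sq_nonneg _) (memLp_norm_adjoint_sq A) hs
      (by norm_num) (integral_norm_adjoint_sq hA) (integral_norm_adjoint_sq_sq_le hA)

variable [MeasurableSpace V] [BorelSpace V]

lemma integrable_norm_adjoint_rpow (hα : 0 ≤ α) (hα₂ : α ≤ 2) (A : E →L[ℝ] V) :
    Integrable (fun v => ‖(A†) v‖ ^ α) (stdGaussian V) := by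
  simp_rw [← sq_rpow_half (norm_nonneg _) α]
  exact integrable_rpow_of_le_one (fun _ => sq_nonneg _)
    ((memLp_norm_adjoint_sq A).integrable one_le_two) (by positivity) (by linarith)

lemma integral_norm_adjoint_rpow_le [Countable ι] (hα : 0 ≤ α) (hα₂ : α ≤ 2) {A : E →L[ℝ] V}
    (hA : Summable fun i => ‖A (b i)‖ ^ 2) :
    ∫ v, ‖(A†) v‖ ^ α ∂stdGaussian V ≤ hsNormSq b A ^ (α / 2) := by
  simp_rw [← sq_rpow_half (norm_nonneg _) α, ← integral_norm_adjoint_sq hA]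
  exact integral_rpow_le_rpow_integral (fun _ => sq_nonneg _)
    ((memLp_norm_adjoint_sq A).integrable one_le_two) (by positivity) (by linarith)

variable {μ : Measure S} {f : S → E →L[ℝ] V}

lemma aestronglyMeasurable_adjoint_prod (hf : AEStronglyMeasurable f μ) :
    AEStronglyMeasurable (fun p : S × V => ((f p.1)†) p.2) (μ.prod (stdGaussian V)) :=
  isBoundedBilinearMap_apply.continuous.comp_aestronglyMeasurable
    ((ContinuousLinearMap.adjoint.continuous.comp_aestronglyMeasurable hf.comp_fst).prodMk
      aestronglyMeasurable_id.comp_snd)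

variable [Countable ι]

namespace HSIntegrable

lemma integrable_norm_adjoint_rpow_prod (hf : HSIntegrable b α f μ) (hα : 0 ≤ α) (hα₂ : α ≤ 2) :
    Integrable (fun p : S × V => ‖((f p.1)†) p.2‖ ^ α) (μ.prod (stdGaussian V)) := by
  have hmeas : AEStronglyMeasurable (fun p : S × V => ‖((f p.1)†) p.2‖ ^ α)
      (μ.prod (stdGaussian V)) :=
    ((aestronglyMeasurable_adjoint_prod hf.aestronglyMeasurable).norm.aemeasurable.pow_const
      α).aestronglyMeasurable
  refine (integrable_prod_iff hmeas).2
    ⟨ae_of_all _ fun t => integrable_norm_adjoint_rpow hα hα₂ (f t), ?_⟩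
  refine hf.integrable.mono' hmeas.norm.integral_prod_right' ?_
  filter_upwards [hf.ae_summable] with t ht
  have hpow₀ (v : V) : 0 ≤ ‖((f t)†) v‖ ^ α := Real.rpow_nonneg (norm_nonneg _) α
  simp_rw [Real.norm_of_nonneg (hpow₀ _), Real.norm_of_nonneg (integral_nonneg hpow₀)]
  exact integral_norm_adjoint_rpow_le hα hα₂ ht

lemma integrable_truncNormAdjoint_prod (hf : HSIntegrable b α f μ) :
    Integrable (fun p : S × V => truncNormAdjoint b α (f p.1) p.2) (μ.prod (stdGaussian V)) := by
  have hs : AEMeasurable (fun p : S × V => hsNormSq b (f p.1)) (μ.prod (stdGaussian V)) :=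
    aemeasurable_hsNormSq b hf.aestronglyMeasurable.comp_fst
  have hnorm := (aestronglyMeasurable_adjoint_prod (V := V) hf.aestronglyMeasurable
    ).norm.aemeasurable.pow_const 2
  refine (hf.integrable.comp_fst (stdGaussian V)).mono'
    ((hs.pow_const (α / 2)).mul ((hnorm.div hs).min aemeasurable_const)).aestronglyMeasurable
    (ae_of_all _ fun p => ?_)
  rw [Real.norm_of_nonneg (truncNormAdjoint_nonneg _ _)]
  exact truncNormAdjoint_le_hsNormSq_rpow _ _

variable [SFinite μ]

lemma integral_stableExponent_le (hf : HSIntegrable b α f μ) (hα : 0 ≤ α) (hα₂ : α ≤ 2) :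
    ∫ v, stableExponent α f μ v ∂stdGaussian V ≤ ∫ t, hsNormSq b (f t) ^ (α / 2) ∂μ := by
  have hprod := hf.integrable_norm_adjoint_rpow_prod hα hα₂
  simp_rw [stableExponent]
  rw [← integral_integral_swap hprod]
  exact integral_mono_ae hprod.integral_prod_left hf.integrable
    (hf.ae_summable.mono fun t ht => integral_norm_adjoint_rpow_le hα hα₂ ht)

lemma integral_div_three_le_integral_truncNormAdjoint (hf : HSIntegrable b α f μ) (hα : 0 < α) :
    (∫ t, hsNormSq b (f t) ^ (α / 2) ∂μ) / 3
      ≤ ∫ v, ∫ t, truncNormAdjoint b α (f t) v ∂μ ∂stdGaussian V := by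
  have hprod := hf.integrable_truncNormAdjoint_prod
  rw [← integral_integral_swap hprod, ← integral_div]
  exact integral_mono_ae (hf.integrable.div_const 3) hprod.integral_prod_left
    (hf.ae_summable.mono fun t ht => hsNormSq_rpow_div_three_le_integral_truncNormAdjoint hα ht)

lemma integrable_one_sub_exp_neg_stableExponent (hf : HSIntegrable b α f μ) (hα : 0 ≤ α)
    (hα₂ : α ≤ 2) :
    Integrable (fun v => 1 - Real.exp (-stableExponent α f μ v)) (stdGaussian V) := by
  have hΘ : Integrable (stableExponent α f μ) (stdGaussian V) :=
    (hf.integrable_norm_adjoint_rpow_prod hα hα₂).integral_prod_right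
  refine hΘ.mono' (by have := hΘ.aemeasurable; fun_prop) (ae_of_all _ fun v => ?_)
  rw [Real.norm_of_nonneg (one_sub_exp_neg_nonneg (stableExponent_nonneg α f μ v))]
  exact one_sub_exp_neg_le _

lemma integral_one_sub_exp_neg_stableExponent_le (hf : HSIntegrable b α f μ) (hα : 0 ≤ α)
    (hα₂ : α ≤ 2) : ∫ v, (1 - Real.exp (-stableExponent α f μ v)) ∂stdGaussian V
      ≤ ∫ t, hsNormSq b (f t) ^ (α / 2) ∂μ :=
  (integral_mono (hf.integrable_one_sub_exp_neg_stableExponent hα hα₂)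
    (hf.integrable_norm_adjoint_rpow_prod hα hα₂).integral_prod_right
    fun _ => one_sub_exp_neg_le _).trans (hf.integral_stableExponent_le hα hα₂)

lemma one_sub_exp_neg_div_three_le_integral_one_sub_exp_neg_stableExponent
    (hf : HSIntegrable b α f μ) (hα : 0 < α) (hα₂ : α ≤ 2) :
    (1 - Real.exp (-∫ t, hsNormSq b (f t) ^ (α / 2) ∂μ)) / 3
      ≤ ∫ v, (1 - Real.exp (-stableExponent α f μ v)) ∂stdGaussian V := by
  set I := ∫ t, hsNormSq b (f t) ^ (α / 2) ∂μ
  set Y : V → ℝ := fun v => ∫ t, truncNormAdjoint b α (f t) v ∂μ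
  have hY : Integrable Y (stdGaussian V) := hf.integrable_truncNormAdjoint_prod.integral_prod_right
  have hmean : I / 3 ≤ ∫ v, Y v ∂stdGaussian V :=
    hf.integral_div_three_le_integral_truncNormAdjoint hα
  have hI₀ : 0 ≤ I := integral_nonneg fun t => Real.rpow_nonneg (hsNormSq_nonneg _ _) _
  rcases hI₀.eq_or_lt with hI | hI
  · simpa [← hI] using
      integral_nonneg fun v => one_sub_exp_neg_nonneg (stableExponent_nonneg α f μ v)
  have hpt : ∀ᵐ v ∂stdGaussian V,
      Y v / I * (1 - Real.exp (-I)) ≤ 1 - Real.exp (-stableExponent α f μ v) := by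
    filter_upwards [hf.integrable_truncNormAdjoint_prod.prod_left_ae,
      (hf.integrable_norm_adjoint_rpow_prod hα.le hα₂).prod_left_ae] with v hK hpow
    have hY₀ : 0 ≤ Y v := integral_nonneg fun t => truncNormAdjoint_nonneg _ _
    have hYI : Y v ≤ I := integral_mono hK hf.integrable
      fun t => truncNormAdjoint_le_hsNormSq_rpow _ _
    have hYΘ : Y v ≤ stableExponent α f μ v := integral_mono hK hpow
      fun t => truncNormAdjoint_le_norm_adjoint_rpow hα hα₂ _ _
    calc Y v / I * (1 - Real.exp (-I)) ≤ 1 - Real.exp (-(Y v / I * I)) :=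
          mul_one_sub_exp_neg_le (by positivity) (div_le_one_of_le₀ hYI hI₀) I
      _ = 1 - Real.exp (-Y v) := by rw [div_mul_cancel₀ _ hI.ne']
      _ ≤ 1 - Real.exp (-stableExponent α f μ v) := by gcongr
  calc (1 - Real.exp (-I)) / 3 = I / 3 / I * (1 - Real.exp (-I)) := by field_simp
    _ ≤ (∫ v, Y v ∂stdGaussian V) / I * (1 - Real.exp (-I)) := by
      have := one_sub_exp_neg_nonneg hI₀
      gcongr
    _ = ∫ v, Y v / I * (1 - Real.exp (-I)) ∂stdGaussian V := by
      rw [integral_mul_const, integral_div]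
    _ ≤ ∫ v, (1 - Real.exp (-stableExponent α f μ v)) ∂stdGaussian V :=
      integral_mono_ae ((hY.div_const I).mul_const _)
        (hf.integrable_one_sub_exp_neg_stableExponent hα.le hα₂) hpt

end HSIntegrable

end StableExponent

section Law

open ProbabilityTheory
open scoped InnerProduct

section Parseval

variable {F : Type*} [NormedAddCommGroup F] [InnerProductSpace ℝ F] [MeasurableSpace F]
  [BorelSpace F] [SecondCountableTopology F] (ρ ν : Measure F)

lemma integral_charFun_comm [IsFiniteMeasure ρ] [IsFiniteMeasure ν] :
    ∫ x, charFun ν x ∂ρ = ∫ y, charFun ρ y ∂ν := by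
  simp_rw [charFun_apply]
  rw [integral_integral_swap]
  · simp_rw [real_inner_comm]
  · refine (integrable_const (1 : ℝ)).mono' (by fun_prop) (ae_of_all _ fun p => ?_)
    exact (Complex.norm_exp_ofReal_mul_I _).le

lemma integral_one_sub_charFun_comm [IsProbabilityMeasure ρ] [IsProbabilityMeasure ν] :
    ∫ x, (1 - charFun ν x) ∂ρ = ∫ y, (1 - charFun ρ y) ∂ν := by
  have hint (ρ ν : Measure F) [IsProbabilityMeasure ρ] [IsProbabilityMeasure ν] :
      Integrable (charFun ν) ρ :=
    .of_bound measurable_charFun.aestronglyMeasurable 1 (ae_of_all _ norm_charFun_le_one)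
  rw [integral_sub (integrable_const 1) (hint ρ ν), integral_sub (integrable_const 1) (hint ν ρ),
    integral_charFun_comm ρ ν]
  simp

end Parseval

variable {E F S : Type*} [NormedAddCommGroup E] [InnerProductSpace ℝ E] [CompleteSpace E]
  [NormedAddCommGroup F] [InnerProductSpace ℝ F] [CompleteSpace F] [MeasurableSpace F]
  [BorelSpace F] [MeasurableSpace S]

/-- `ρ` is the law of the stochastic integral of `f` against the canonical `α`-stable cylindrical
Lévy process, where `μ` is the time measure. -/
def IsStableIntegralLaw (ρ : Measure F) (α : ℝ) (f : S → E →L[ℝ] F) (μ : Measure S) : Prop :=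
  ∀ u, charFun ρ u = Complex.exp (-(stableExponent α f μ u : ℝ))

variable {α : ℝ} {f : S → E →L[ℝ] F} {μ : Measure S} {ρ : Measure F}

lemma IsStableIntegralLaw.map {V : Type*} [NormedAddCommGroup V] [InnerProductSpace ℝ V]
    [CompleteSpace V] [MeasurableSpace V] [BorelSpace V] (hρ : IsStableIntegralLaw ρ α f μ)
    (B : F →L[ℝ] V) : IsStableIntegralLaw (ρ.map B) α (fun t => B ∘L f t) μ := by
  intro v
  have hchar : charFun (ρ.map B) v = charFun ρ ((B†) v) := by
    simp_rw [charFun_apply]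
    rw [integral_map (by fun_prop) (by fun_prop)]
    simp_rw [B.adjoint_inner_right]
  rw [hchar, hρ ((B†) v)]
  simp_rw [stableExponent, ContinuousLinearMap.adjoint_comp, ContinuousLinearMap.comp_apply]

lemma IsStableIntegralLaw.integral_one_sub_exp_neg_norm_sq {V : Type*} [NormedAddCommGroup V]
    [InnerProductSpace ℝ V] [FiniteDimensional ℝ V] [MeasurableSpace V] [BorelSpace V]
    {f : S → E →L[ℝ] V} {ρ : Measure V} [IsProbabilityMeasure ρ]
    (hρ : IsStableIntegralLaw ρ α f μ) :
    ∫ x, (1 - Real.exp (-(‖x‖ ^ 2 / 2))) ∂ρ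
      = ∫ v, (1 - Real.exp (-stableExponent α f μ v)) ∂stdGaussian V := by
  have hparseval := integral_one_sub_charFun_comm ρ (stdGaussian V)
  simp_rw [hρ _, charFun_stdGaussian, neg_div] at hparseval
  exact_mod_cast hparseval

end Law

section Limit

variable {ι E F S : Type*} [NormedAddCommGroup E] [InnerProductSpace ℝ E]
  [NormedAddCommGroup F] [NormedSpace ℝ F]
  {V : ℕ → Type*} [∀ n, NormedAddCommGroup (V n)] [∀ n, NormedSpace ℝ (V n)]
  {B : ∀ n, F →L[ℝ] V n}

lemma tendsto_hsNormSq_comp (hB₁ : ∀ n, ‖B n‖ ≤ 1)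
    (hB : ∀ x, Tendsto (fun n => ‖B n x‖) atTop (𝓝 ‖x‖)) {b : HilbertBasis ι ℝ E}
    {A : E →L[ℝ] F} (hA : Summable fun i => ‖A (b i)‖ ^ 2) :
    Tendsto (fun n => hsNormSq b (B n ∘L A)) atTop (𝓝 (hsNormSq b A)) := by
  refine tendsto_tsum_of_dominated_convergence hA (fun i => (hB _).pow 2)
    (.of_forall fun n i => ?_)
  rw [Real.norm_of_nonneg (sq_nonneg _)]
  exact norm_apply_sq_le_of_norm_le_one (hB₁ n) _

lemma HSIntegrable.tendsto_integral_comp [Countable ι] [MeasurableSpace S] {μ : Measure S}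
    {α : ℝ} (hα : 0 ≤ α) {b : HilbertBasis ι ℝ E} {f : S → E →L[ℝ] F}
    (hf : HSIntegrable b α f μ) (hB₁ : ∀ n, ‖B n‖ ≤ 1)
    (hB : ∀ x, Tendsto (fun n => ‖B n x‖) atTop (𝓝 ‖x‖)) :
    Tendsto (fun n => ∫ t, hsNormSq b (B n ∘L f t) ^ (α / 2) ∂μ) atTop
      (𝓝 (∫ t, hsNormSq b (f t) ^ (α / 2) ∂μ)) := by
  refine tendsto_integral_of_dominated_convergence _ (fun n =>
    (hf.comp aestronglyMeasurable_const (fun _ => hB₁ n) hα).integrable.aestronglyMeasurable)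
    hf.integrable (fun n => ?_) ?_
  · filter_upwards [hf.ae_hsNormSq_comp_rpow_le (C := fun _ => B n) (fun _ => hB₁ n) hα] with t ht
    exact (Real.norm_of_nonneg (Real.rpow_nonneg (hsNormSq_nonneg _ _) _)).trans_le ht
  · filter_upwards [hf.ae_summable] with t ht
    exact (tendsto_hsNormSq_comp hB₁ hB ht).rpow_const (.inr (by positivity))

lemma tendsto_integral_one_sub_exp_neg_norm_sq_map [MeasurableSpace F] [BorelSpace F]
    [∀ n, MeasurableSpace (V n)] [∀ n, BorelSpace (V n)] (ρ : Measure F) [IsFiniteMeasure ρ]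
    (hB : ∀ x, Tendsto (fun n => ‖B n x‖) atTop (𝓝 ‖x‖)) :
    Tendsto (fun n => ∫ y, (1 - Real.exp (-(‖y‖ ^ 2 / 2))) ∂(ρ.map (B n))) atTop
      (𝓝 (∫ x, (1 - Real.exp (-(‖x‖ ^ 2 / 2))) ∂ρ)) := by
  have hmap (n : ℕ) : ∫ y, (1 - Real.exp (-(‖y‖ ^ 2 / 2))) ∂(ρ.map (B n))
      = ∫ x, (1 - Real.exp (-(‖B n x‖ ^ 2 / 2))) ∂ρ :=
    integral_map (by fun_prop) (by fun_prop)
  simp_rw [hmap]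
  refine tendsto_integral_of_dominated_convergence (fun _ => 1)
    (fun n => Continuous.aestronglyMeasurable (by fun_prop)) (integrable_const 1)
    (fun n => ae_of_all _ fun x => norm_one_sub_exp_neg_le_one (by positivity))
    (ae_of_all _ fun x => ?_)
  exact (((hB x).pow 2).div_const 2).neg.rexp.const_sub 1

lemma exists_monotone_finiteDimensional_dense (F : Type*) [NormedAddCommGroup F]
    [NormedSpace ℝ F] [TopologicalSpace.SeparableSpace F] :
    ∃ U : ℕ → Submodule ℝ F, (∀ n, FiniteDimensional ℝ (U n)) ∧ Monotone U ∧
      (⨆ n, U n).topologicalClosure = ⊤ := by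
  let x := TopologicalSpace.denseSeq F
  refine ⟨fun n => Submodule.span ℝ (x '' Set.Iio n),
    fun n => FiniteDimensional.span_of_finite ℝ ((Set.finite_Iio n).image x),
    fun m n hmn => Submodule.span_mono (Set.image_mono (Set.Iio_subset_Iio hmn)), ?_⟩
  rw [← Submodule.dense_iff_topologicalClosure_eq_top]
  refine (TopologicalSpace.denseRange_denseSeq F).mono ?_
  rintro _ ⟨k, rfl⟩
  exact Submodule.mem_iSup_of_mem (k + 1) (Submodule.subset_span ⟨k, k.lt_succ_self, rfl⟩)

end Limit

section Comparison

variable {ι E F S : Type*} [Countable ι] [NormedAddCommGroup E] [InnerProductSpace ℝ E]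
  [CompleteSpace E] [NormedAddCommGroup F] [InnerProductSpace ℝ F] [CompleteSpace F]
  [MeasurableSpace F] [BorelSpace F] [SecondCountableTopology F] [MeasurableSpace S]
  {α : ℝ} {b : HilbertBasis ι ℝ E} {f : S → E →L[ℝ] F} {μ : Measure S} [SFinite μ]
  {ρ : Measure F} [IsProbabilityMeasure ρ]

theorem IsStableIntegralLaw.integral_one_sub_exp_neg_norm_sq_bounds
    (hρ : IsStableIntegralLaw ρ α f μ) (hf : HSIntegrable b α f μ) (hα : 0 < α) (hα₂ : α ≤ 2) :
    (1 - Real.exp (-∫ t, hsNormSq b (f t) ^ (α / 2) ∂μ)) / 3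
        ≤ ∫ x, (1 - Real.exp (-(‖x‖ ^ 2 / 2))) ∂ρ ∧
      ∫ x, (1 - Real.exp (-(‖x‖ ^ 2 / 2))) ∂ρ ≤ ∫ t, hsNormSq b (f t) ^ (α / 2) ∂μ := by
  obtain ⟨U, _, hU, hdense⟩ := exists_monotone_finiteDimensional_dense F
  have hB₁ (n : ℕ) : ‖(U n).orthogonalProjectionOnto‖ ≤ 1 := (U n).orthogonalProjectionOnto_norm_le
  have hB (x : F) : Tendsto (fun n => ‖(U n).orthogonalProjectionOnto x‖) atTop (𝓝 ‖x‖) :=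
    (Submodule.starProjection_tendsto_self U hU x hdense.ge).norm
  have hf' (n : ℕ) := hf.comp (aestronglyMeasurable_const (b := (U n).orthogonalProjectionOnto))
    (fun _ => hB₁ n) hα.le
  have hprob (n : ℕ) : IsProbabilityMeasure (ρ.map (U n).orthogonalProjectionOnto) :=
    Measure.isProbabilityMeasure_map (by fun_prop)
  have hρ' (n : ℕ) :=
    (hρ.map (U n).orthogonalProjectionOnto).integral_one_sub_exp_neg_norm_sq
  have hI := hf.tendsto_integral_comp hα.le hB₁ hB
  have hE := tendsto_integral_one_sub_exp_neg_norm_sq_map ρ hB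
  constructor
  · refine le_of_tendsto_of_tendsto' ((hI.neg.rexp.const_sub 1).div_const 3) hE fun n => ?_
    rw [hρ' n]
    exact (hf' n).one_sub_exp_neg_div_three_le_integral_one_sub_exp_neg_stableExponent hα hα₂
  · refine le_of_tendsto_of_tendsto' hE hI fun n => ?_
    rw [hρ' n]
    exact (hf' n).integral_one_sub_exp_neg_stableExponent_le hα.le hα₂

end Comparison

section StepFunctions

variable {M : Type*} {N : ℕ} {tp : Fin (N + 1) → ℝ}

lemma sum_ite_Ioc_mem_insert_range [AddCommMonoid M] (htp : Monotone tp) (Φ : Fin N → M) (s : ℝ) :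
    (∑ i, if s ∈ Set.Ioc (tp i.castSucc) (tp i.succ) then Φ i else 0)
      ∈ insert 0 (Set.range Φ) := by
  by_cases hs : ∃ j : Fin N, s ∈ Set.Ioc (tp j.castSucc) (tp j.succ)
  · obtain ⟨j, hj⟩ := hs
    have hdisj (i : Fin N) (hij : i ≠ j) : s ∉ Set.Ioc (tp i.castSucc) (tp i.succ) := by
      intro hi
      rcases lt_or_gt_of_ne hij with h | h
      · exact (hi.2.trans (htp (Fin.succ_le_castSucc_iff.2 h))).not_gt hj.1
      · exact (hj.2.trans (htp (Fin.succ_le_castSucc_iff.2 h))).not_gt hi.1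
    rw [Finset.sum_eq_single j (fun i _ hij => if_neg (hdisj i hij)) (by simp), if_pos hj]
    exact .inr ⟨j, rfl⟩
  · push Not at hs
    exact .inl (Finset.sum_eq_zero fun i _ => if_neg (hs i))

lemma aestronglyMeasurable_of_eq_sum_ite_Ioc [NormedAddCommGroup M] {f : ℝ → M} {Φ : Fin N → M}
    (hf : ∀ s, s ≠ 0 → f s = ∑ i, if s ∈ Set.Ioc (tp i.castSucc) (tp i.succ) then Φ i else 0) :
    AEStronglyMeasurable f := by
  have hterm (i : Fin N) : StronglyMeasurable fun s =>
      if s ∈ Set.Ioc (tp i.castSucc) (tp i.succ) then Φ i else 0 :=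
    .ite measurableSet_Ioc stronglyMeasurable_const stronglyMeasurable_const
  refine ⟨_, Finset.univ.stronglyMeasurable_fun_sum fun i _ => hterm i, ?_⟩
  filter_upwards [Measure.ae_ne volume 0] with s hs using hf s hs

variable {E F : Type} [NormedAddCommGroup E] [InnerProductSpace ℝ E] [NormedAddCommGroup F]
  [InnerProductSpace ℝ F] {T : ℝ}

lemma IsStepHS.hsIntegrable {bG : HilbertBasis ℕ ℝ E} {ψ : ℝ → (E →L[ℝ] F)}
    (hψ : IsStepHS bG T ψ) (α : ℝ) : HSIntegrable bG α ψ (volume.restrict (Set.Ioc 0 T)) := by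
  obtain ⟨N, tp, Φ, htp, -, -, hΦ, hψ⟩ := hψ
  have hmeas : AEStronglyMeasurable ψ (volume.restrict (Set.Ioc 0 T)) :=
    (aestronglyMeasurable_of_eq_sum_ite_Ioc hψ).restrict
  have hmem : ∀ᵐ t ∂volume.restrict (Set.Ioc 0 T), ψ t ∈ insert 0 (Set.range Φ) := by
    filter_upwards [ae_restrict_of_ae (Measure.ae_ne volume 0)] with t ht
    exact hψ t ht ▸ sum_ite_Ioc_mem_insert_range htp.monotone Φ t
  refine ⟨hmeas, ?_, ?_⟩
  · filter_upwards [hmem] with t ht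
    rcases ht with h₀ | ⟨i, hi⟩
    · simp [h₀, summable_zero]
    · exact hi ▸ hΦ i
  · obtain ⟨C, hC⟩ := (((Set.finite_range Φ).insert 0).image
      fun A => ‖hsNormSq bG A ^ (α / 2)‖).bddAbove
    refine .of_bound ((aemeasurable_hsNormSq bG hmeas).pow_const _).aestronglyMeasurable C ?_
    filter_upwards [hmem] with t ht using hC (Set.mem_image_of_mem _ ht)

lemma IsStepOp1.aestronglyMeasurable {γ : ℝ → (F →L[ℝ] F)} (hγ : IsStepOp1 T γ) :
    AEStronglyMeasurable γ := by
  obtain ⟨-, M, sp, Γ, -, -, -, hγ⟩ := hγ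
  exact aestronglyMeasurable_of_eq_sum_ite_Ioc hγ

lemma isStepOp1_indicator_id (hT : 0 < T) :
    IsStepOp1 T ((Set.Ioc 0 T).indicator fun _ => ContinuousLinearMap.id ℝ F) := by
  refine ⟨fun s => ?_, 1, ![0, T], fun _ => .id ℝ F, ?_, rfl, rfl, fun s _ => ?_⟩
  · exact (norm_indicator_le_norm_self _ s).trans ContinuousLinearMap.norm_id_le
  · simpa [Fin.strictMono_iff_lt_succ] using hT
  · by_cases hs : 0 < s ∧ s ≤ T <;> simp [hs]

end StepFunctions

section StochasticIntegral

variable {E F : Type} [NormedAddCommGroup E] [InnerProductSpace ℝ E] [CompleteSpace E]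
  [NormedAddCommGroup F] [InnerProductSpace ℝ F] [CompleteSpace F] [MeasurableSpace F]
  {P : Measure Ω} {X : Ω → F} {T α : ℝ} {f g : ℝ → (E →L[ℝ] F)}

namespace IsIntegralOf

lemma congr (hX : IsIntegralOf P X T α f) (hfg : Set.EqOn f g (Set.Ioc 0 T)) :
    IsIntegralOf P X T α g := by
  refine ⟨hX.1, fun u => ?_⟩
  rw [hX.2 u, setIntegral_congr_fun measurableSet_Ioc fun t ht => by rw [hfg ht]]

variable [BorelSpace F]

lemma isStableIntegralLaw (hX : IsIntegralOf P X T α f) :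
    IsStableIntegralLaw (P.map X) α f (volume.restrict (Set.Ioc 0 T)) := by
  intro u
  rw [charFun_apply, integral_map hX.1.aemeasurable (by fun_prop)]
  simp_rw [real_inner_comm u]
  exact hX.2 u

variable [IsProbabilityMeasure P]

lemma integrable_one_sub_exp_neg_norm_sq (hX : IsIntegralOf P X T α f) :
    Integrable (fun ω => 1 - Real.exp (-(‖X ω‖ ^ 2 / 2))) P := by
  have hXm := hX.1
  exact .of_bound (Measurable.aestronglyMeasurable (by fun_prop)) 1
    (ae_of_all _ fun ω => norm_one_sub_exp_neg_le_one (by positivity))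

variable {ι : Type*} [Countable ι] {bG : HilbertBasis ι ℝ E} [SecondCountableTopology F]

lemma integral_one_sub_exp_neg_norm_sq_bounds (hX : IsIntegralOf P X T α f)
    (hf : HSIntegrable bG α f (volume.restrict (Set.Ioc 0 T))) (hα : 0 < α) (hα₂ : α ≤ 2) :
    (1 - Real.exp (-∫ t in Set.Ioc 0 T, hsNormSq bG (f t) ^ (α / 2))) / 3
        ≤ ∫ ω, (1 - Real.exp (-(‖X ω‖ ^ 2 / 2))) ∂P ∧
      ∫ ω, (1 - Real.exp (-(‖X ω‖ ^ 2 / 2))) ∂P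
        ≤ ∫ t in Set.Ioc 0 T, hsNormSq bG (f t) ^ (α / 2) := by
  have := Measure.isProbabilityMeasure_map (μ := P) hX.1.aemeasurable
  have hlaw := hX.isStableIntegralLaw.integral_one_sub_exp_neg_norm_sq_bounds hf hα hα₂
  rwa [integral_map hX.1.aemeasurable (by fun_prop)] at hlaw

lemma one_sub_exp_neg_div_three_le_integral_min_norm_one (hX : IsIntegralOf P X T α f)
    (hf : HSIntegrable bG α f (volume.restrict (Set.Ioc 0 T))) (hα : 0 < α) (hα₂ : α ≤ 2) :
    (1 - Real.exp (-∫ t in Set.Ioc 0 T, hsNormSq bG (f t) ^ (α / 2))) / 3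
      ≤ ∫ ω, min ‖X ω‖ 1 ∂P := by
  have hXm := hX.1
  refine (hX.integral_one_sub_exp_neg_norm_sq_bounds hf hα hα₂).1.trans ?_
  refine integral_mono hX.integrable_one_sub_exp_neg_norm_sq ?_
    fun ω => one_sub_exp_neg_sq_half_le_min (norm_nonneg _)
  refine .of_bound (Measurable.aestronglyMeasurable (by fun_prop)) 1 (ae_of_all _ fun ω => ?_)
  rw [Real.norm_of_nonneg (by positivity)]
  exact min_le_right _ _

lemma integral_min_norm_one_le_sqrt (hX : IsIntegralOf P X T α f)
    (hf : HSIntegrable bG α f (volume.restrict (Set.Ioc 0 T))) (hα : 0 < α) (hα₂ : α ≤ 2) :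
    ∫ ω, min ‖X ω‖ 1 ∂P ≤ √(3 * ∫ t in Set.Ioc 0 T, hsNormSq bG (f t) ^ (α / 2)) := by
  have hXm := hX.1
  have hmin₀ (ω : Ω) : 0 ≤ min ‖X ω‖ 1 := by positivity
  have hint : Integrable (fun ω => min ‖X ω‖ 1 ^ 2) P := by
    refine .of_bound (Measurable.aestronglyMeasurable (by fun_prop)) 1 (ae_of_all _ fun ω => ?_)
    rw [Real.norm_of_nonneg (by positivity)]
    exact pow_le_one₀ (hmin₀ ω) (min_le_right _ _)
  calc ∫ ω, min ‖X ω‖ 1 ∂P = ∫ ω, (min ‖X ω‖ 1 ^ 2) ^ (1 / 2 : ℝ) ∂P := by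
        simp_rw [sq_rpow_half (hmin₀ _), Real.rpow_one]
    _ ≤ √(∫ ω, min ‖X ω‖ 1 ^ 2 ∂P) := by
      rw [Real.sqrt_eq_rpow]
      exact integral_rpow_le_rpow_integral (fun _ => sq_nonneg _) hint (by norm_num) (by norm_num)
    _ ≤ √(3 * ∫ ω, (1 - Real.exp (-(‖X ω‖ ^ 2 / 2))) ∂P) := by
      rw [← integral_const_mul]
      exact Real.sqrt_le_sqrt (integral_mono hint
        (hX.integrable_one_sub_exp_neg_norm_sq.const_mul 3)
        fun ω => min_one_sq_le_three_mul_one_sub_exp (norm_nonneg _))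
    _ ≤ √(3 * ∫ t in Set.Ioc 0 T, hsNormSq bG (f t) ^ (α / 2)) := by
      gcongr
      exact (hX.integral_one_sub_exp_neg_norm_sq_bounds hf hα hα₂).2

lemma integral_min_norm_one_le_sqrt_of_isStepOp1 {γ : ℝ → (F →L[ℝ] F)}
    (hX : IsIntegralOf P X T α fun t => (γ t).comp (f t)) (hγ : IsStepOp1 T γ)
    (hf : HSIntegrable bG α f (volume.restrict (Set.Ioc 0 T))) (hα : 0 < α) (hα₂ : α ≤ 2) :
    ∫ ω, min ‖X ω‖ 1 ∂P ≤ √(3 * ∫ t in Set.Ioc 0 T, hsNormSq bG (f t) ^ (α / 2)) := by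
  have hγm := hγ.aestronglyMeasurable.restrict (s := Set.Ioc 0 T)
  refine (hX.integral_min_norm_one_le_sqrt (hf.comp hγm hγ.1 hα.le) hα hα₂).trans ?_
  exact Real.sqrt_le_sqrt (by linarith [hf.integral_comp_le hγm hγ.1 hα.le])

end IsIntegralOf

end StochasticIntegral

lemma tendsto_zero_of_tendsto_one_sub_exp_neg {β : Type*} {l : Filter β} {u : β → ℝ}
    (hu : Tendsto (fun n => 1 - Real.exp (-u n)) l (𝓝 0)) : Tendsto u l (𝓝 0) := by
  simpa using ((hu.const_sub 1).log (by norm_num)).neg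

theorem stmt9_general (P : Measure Ω) [IsProbabilityMeasure P] {ι : Type*} [Countable ι]
    (bG : HilbertBasis ι ℝ G) (T : ℝ) (hT : 0 < T) (α : ℝ) (hα : 0 < α) (hα₂ : α ≤ 2)
    (ψ : ℕ → ℝ → (G →L[ℝ] H))
    (hψ : ∀ n, HSIntegrable bG α (ψ n) (volume.restrict (Set.Ioc 0 T)))
    (hex : ∀ n, ∃ X : Ω → H, IsIntegralOf P X T α (ψ n)) :
    Tendsto (fun n => ∫ t in Set.Ioc 0 T, hsNormSq bG (ψ n t) ^ (α / 2)) atTop (𝓝 0)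
      ↔ (∀ ε : ℝ, 0 < ε → ∃ n₀ : ℕ, ∀ n ≥ n₀,
          ∀ γ : ℝ → (H →L[ℝ] H), IsStepOp1 T γ →
            ∀ X : Ω → H, IsIntegralOf P X T α (fun t => (γ t).comp (ψ n t)) →
              ∫ ω, min ‖X ω‖ 1 ∂P ≤ ε) := by
  refine ⟨fun h ε hε => ?_, fun h => ?_⟩
  · have hsqrt : Tendsto (fun n => √(3 * ∫ t in Set.Ioc 0 T, hsNormSq bG (ψ n t) ^ (α / 2)))
        atTop (𝓝 0) := by simpa using (h.const_mul 3).sqrt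
    obtain ⟨n₀, hn₀⟩ := eventually_atTop.1 (hsqrt.eventually_le_const hε)
    refine ⟨n₀, fun n hn γ hγ X hX => ?_⟩
    exact (hX.integral_min_norm_one_le_sqrt_of_isStepOp1 hγ (hψ n) hα hα₂).trans (hn₀ n hn)
  · choose X hX using hex
    have hX' (n : ℕ) := (hX n).congr (g := fun t =>
      ((Set.Ioc 0 T).indicator (fun _ => ContinuousLinearMap.id ℝ H) t).comp (ψ n t))
      fun t ht => by simp [ht]
    have hE : Tendsto (fun n => ∫ ω, min ‖X n ω‖ 1 ∂P) atTop (𝓝 0) := by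
      refine Metric.tendsto_atTop.2 fun ε hε => ?_
      obtain ⟨n₀, hn₀⟩ := h (ε / 2) (half_pos hε)
      refine ⟨n₀, fun n hn => ?_⟩
      rw [Real.dist_0_eq_abs, abs_of_nonneg (integral_nonneg fun ω => by positivity)]
      linarith [hn₀ n hn _ (isStepOp1_indicator_id hT) (X n) (hX' n)]
    refine tendsto_zero_of_tendsto_one_sub_exp_neg ?_
    refine squeeze_zero (fun n => ?_) (fun n => ?_) (by simpa using hE.const_mul 3)
    · exact one_sub_exp_neg_nonneg
        (integral_nonneg fun t => Real.rpow_nonneg (hsNormSq_nonneg _ _) _)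
    · have := (hX n).one_sub_exp_neg_div_three_le_integral_min_norm_one (hψ n) hα hα₂
      linarith

/-- Let `L` be the canonical `α`-stable cylindrical Lévy process on `G`,
`α ∈ (0,2)`, and `(ψ_n)` a sequence of `L₂(G,H)`-valued step functions.  Then
`∫₀^T ‖ψ_n(t)‖_HS^α dt → 0` if and only if
`sup_{γ ∈ S^{1,op}_det} E[‖∫₀^T γψ_n dL‖ ∧ 1] → 0`. -/
theorem stmt9
    (P : Measure Ω) (hP : IsProbabilityMeasure P)
    (bG : HilbertBasis ℕ ℝ G)
    (T : ℝ) (hT : 0 < T)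
    (α : ℝ) (hα : 0 < α) (hα2 : α < 2)
    (ψ : ℕ → ℝ → (G →L[ℝ] H))
    (hstep : ∀ n, IsStepHS bG T (ψ n))
    -- the probability space is rich enough to carry all the stochastic integrals:
    (hex : ∀ f : ℝ → (G →L[ℝ] H), IsStepHS bG T f →
      ∃ X : Ω → H, IsIntegralOf P X T α f) :
    Tendsto (fun n => ∫ t in Set.Ioc 0 T, (∑' i, ‖ψ n t (bG i)‖ ^ 2) ^ (α / 2))
        atTop (𝓝 0)
      ↔ (∀ ε : ℝ, 0 < ε → ∃ n₀ : ℕ, ∀ n ≥ n₀,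
          ∀ γ : ℝ → (H →L[ℝ] H), IsStepOp1 T γ →
            ∀ X : Ω → H, IsIntegralOf P X T α (fun t => (γ t).comp (ψ n t)) →
              ∫ ω, min ‖X ω‖ 1 ∂P ≤ ε) :=
  stmt9_general P bG T hT α hα hα2.le ψ (fun n => (hstep n).hsIntegrable α)
    fun n => hex (ψ n) (hstep n)
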